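/- Let μ, ν ∈ M⁰_T and λ ∈ [0,1]. Then the compact convex set associated with the mixture λμ + (1−λ)ν equals the Minkowski sum λ C_μ + (1−λ) C_ν, where C_μ, C_ν are the convex sets associated with μ and ν. -/

import Mathlib

open MeasureTheory Real Set Pointwise

/-- Cumulative distribution function `F_μ(x) = μ([0,x])`. -/
noncomputable def cdf' (μ : Measure ℝ) (x : ℝ) : ℝ := (μ (Set.Icc 0 x)).toReal

/-- Generalized inverse `F_μ⁻¹(y) = inf {x ≥ 0 : F_μ(x) ≥ y}`. -/
noncomputable def qf (μ : Measure ℝ) (y : ℝ) : ℝ := sInf {x : ℝ | 0 ≤ x ∧ y ≤ cdf' μ x}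

/-- The curve `Z_μ(t) = ∫₀^t exp(i F_μ⁻¹(u)) du`. -/
noncomputable def Zc (μ : Measure ℝ) (t : ℝ) : ℂ :=
  ∫ u in (0:ℝ)..t, Complex.exp (Complex.I * (qf μ u))

/-- The compact convex set associated with a measure: the convex hull of the boundary curve. -/
noncomputable def CCS (μ : Measure ℝ) : Set ℂ := convexHull ℝ (Zc μ '' Set.Icc (0:ℝ) 1)

/-! ### Convex hulls of compact sets -/

lemma IsCompact.convexHull_of_finiteDimensional {E : Type*} [NormedAddCommGroup E]
    [NormedSpace ℝ E] [FiniteDimensional ℝ E] {s : Set E} (hs : IsCompact s) :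
    IsCompact (convexHull ℝ s) := by
  rcases s.eq_empty_or_nonempty with rfl | ⟨p, hp⟩
  · simp
  let ι := Fin (Module.finrank ℝ E + 1)
  let S : Set ((ι → ℝ) × (ι → E)) := stdSimplex ℝ ι ×ˢ Set.univ.pi fun _ => s
  have hS : IsCompact S := (isCompact_stdSimplex ℝ ι).prod (isCompact_univ_pi fun _ => hs)
  have hcont : Continuous fun wz : (ι → ℝ) × (ι → E) => ∑ i, wz.1 i • wz.2 i := by fun_prop
  convert hS.image hcont using 1
  refine Subset.antisymm (fun x hx => ?_) ?_
  · obtain ⟨κ, _, z, w, hz, hind, hw, hw1, rfl⟩ := eq_pos_convex_span_of_mem_convexHull hx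
    have hcard : Fintype.card κ ≤ Fintype.card ι := by
      simpa [ι] using hind.card_le_finrank_succ.trans
        (Nat.succ_le_succ (Submodule.finrank_le _))
    obtain ⟨e⟩ := Function.Embedding.nonempty_of_card_le hcard
    have he := e.injective
    refine ⟨(Function.extend e w 0, Function.extend e z fun _ => p), ⟨⟨fun i => ?_, ?_⟩, ?_⟩, ?_⟩
    · by_cases hi : ∃ k, e k = i
      · obtain ⟨k, rfl⟩ := hi
        simpa [he.extend_apply] using (hw k).le
      · simp [Function.extend_apply' _ _ _ hi]
    · rw [← hw1]
      refine (Fintype.sum_of_injective e he _ _ (fun i hi => ?_) fun k => ?_).symm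
      · exact Function.extend_apply' _ _ _ hi
      · simp [he.extend_apply]
    · intro i _
      by_cases hi : ∃ k, e k = i
      · obtain ⟨k, rfl⟩ := hi
        simpa [he.extend_apply] using hz (mem_range_self k)
      · simpa [Function.extend_apply' _ _ _ hi] using hp
    · refine (Fintype.sum_of_injective e he _ _ (fun i hi => ?_) fun k => ?_).symm
      · simp [Function.extend_apply' _ _ _ hi]
      · simp [he.extend_apply]
  · rintro _ ⟨⟨w, z⟩, ⟨⟨hw, hw1⟩, hz⟩, rfl⟩
    exact (convex_convexHull ℝ s).sum_mem (fun i _ => hw i) hw1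
      fun i _ => subset_convexHull ℝ s (hz i trivial)

lemma subset_of_forall_clm_le {E : Type*} [NormedAddCommGroup E] [NormedSpace ℝ E] {A B : Set E}
    (hB : Convex ℝ B) (hB' : IsClosed B)
    (h : ∀ f : E →L[ℝ] ℝ, ∀ a ∈ A, ∃ b ∈ B, f a ≤ f b) : A ⊆ B := by
  intro a ha
  by_contra haB
  obtain ⟨f, u, hu, hua⟩ := geometric_hahn_banach_closed_point hB hB' haB
  obtain ⟨b, hb, hab⟩ := h f a ha
  linarith [hu b hb]

lemma le_of_mem_convexHull {E : Type*} [NormedAddCommGroup E] [NormedSpace ℝ E] {s : Set E}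
    (f : E →L[ℝ] ℝ) {c : ℝ} (h : ∀ a ∈ s, f a ≤ c) {a : E} (ha : a ∈ convexHull ℝ s) : f a ≤ c :=
  convexHull_min (t := {a | f a ≤ c}) h (convex_halfSpace_le f.toLinearMap.isLinear c) ha

/-! ### Maximising a sinusoid along a monotone angle -/

lemma intervalIntegral_nonneg_of_Ioc {g : ℝ → ℝ} {a b : ℝ} (hab : a ≤ b)
    (hg : ∀ u ∈ Ioc a b, 0 ≤ g u) : 0 ≤ ∫ u in a..b, g u := by
  rw [intervalIntegral.integral_of_le hab]
  exact setIntegral_nonneg measurableSet_Ioc hg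

lemma intervalIntegral_nonpos_of_Ioc {g : ℝ → ℝ} {a b : ℝ} (hab : a ≤ b)
    (hg : ∀ u ∈ Ioc a b, g u ≤ 0) : ∫ u in a..b, g u ≤ 0 := by
  rw [intervalIntegral.integral_of_le hab]
  exact setIntegral_nonpos measurableSet_Ioc hg

lemma integral_sinusoid_le {q g : ℝ → ℝ} {A x c : ℝ} (hA : 0 ≤ A) (hx : x ∈ Icc 0 (2 * π))
    (hq : MonotoneOn q (Icc 0 1)) (hq' : ∀ u ∈ Icc (0 : ℝ) 1, q u ∈ Icc 0 (2 * π))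
    (hg : ∀ u, g u = -(A * sin (q u - x))) (hgi : IntervalIntegrable g volume 0 1)
    (hg0 : ∫ u in (0 : ℝ)..1, g u = 0) (hc : c ∈ Icc (0 : ℝ) 1)
    (hcx : ∀ u ∈ Ioc (0 : ℝ) 1, q u ≤ x ↔ u ≤ c) {t : ℝ} (ht : t ∈ Icc (0 : ℝ) 1) :
    ∫ u in (0 : ℝ)..t, g u ≤ ∫ u in (0 : ℝ)..c, g u := by
  obtain ⟨hx0, hx1⟩ := hx
  obtain ⟨hc0, hc1⟩ := hc
  obtain ⟨ht0, ht1⟩ := ht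
  have hint : ∀ a ∈ Icc (0 : ℝ) 1, ∀ b ∈ Icc (0 : ℝ) 1, IntervalIntegrable g volume a b :=
    fun a ha b hb => hgi.mono_set (uIcc_subset_uIcc (by simpa using ha) (by simpa using hb))
  have hadd : ∀ a ∈ Icc (0 : ℝ) 1, ∀ b ∈ Icc (0 : ℝ) 1,
      (∫ u in (0 : ℝ)..a, g u) + ∫ u in a..b, g u = ∫ u in (0 : ℝ)..b, g u := fun a ha b hb =>
    intervalIntegral.integral_add_adjacent_intervals
      (hint 0 (by simp) a ha) (hint a ha b hb)
  have h1 : (1 : ℝ) ∈ Icc (0 : ℝ) 1 := by simp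
  have hpos : ∀ u, sin (q u - x) ≤ 0 → 0 ≤ g u := fun u hu => by
    rw [hg]; nlinarith
  have hneg : ∀ u, 0 ≤ sin (q u - x) → g u ≤ 0 := fun u hu => by
    rw [hg]; nlinarith
  have hsin_pos : ∀ y, π ≤ y → y ≤ 2 * π → sin y ≤ 0 := fun y h h' => by
    have := sin_nonneg_of_nonneg_of_le_pi (x := y - π) (by linarith) (by linarith)
    rw [sin_sub_pi] at this
    linarith
  have hgt : ∀ u ∈ Ioc (0 : ℝ) 1, c < u → x < q u := fun u hu h => by
    by_contra h'
    exact absurd ((hcx u hu).1 (not_lt.1 h')) (not_le.2 h)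
  have hct := hadd c ⟨hc0, hc1⟩ t ⟨ht0, ht1⟩
  have htc := hadd t ⟨ht0, ht1⟩ c ⟨hc0, hc1⟩
  have hc_one := hadd c ⟨hc0, hc1⟩ 1 h1
  have ht_one := hadd t ⟨ht0, ht1⟩ 1 h1
  rcases le_total π x with hπ | hπ
  · have htail : ∀ b, c ≤ b → b ≤ 1 → ∫ u in c..b, g u ≤ 0 := fun b hb hb1 =>
      intervalIntegral_nonpos_of_Ioc hb fun u hu => hneg u <| by
        have hu' : u ∈ Ioc (0 : ℝ) 1 := ⟨hc0.trans_lt hu.1, hu.2.trans hb1⟩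
        have := hgt u hu' hu.1
        have := (hq' u ⟨hu'.1.le, hu'.2⟩).2
        exact sin_nonneg_of_nonneg_of_le_pi (by linarith) (by linarith)
    rcases le_total c t with h | h
    · linarith [htail t h ht1]
    · rcases le_total (x - π) (q t) with h' | h'
      · have : 0 ≤ ∫ u in t..c, g u := intervalIntegral_nonneg_of_Ioc h fun u hu => hpos u <| by
          have hu' : u ∈ Ioc (0 : ℝ) 1 := ⟨ht0.trans_lt hu.1, hu.2.trans hc1⟩
          have := (hcx u hu').2 hu.2
          have := hq ⟨ht0, ht1⟩ ⟨hu'.1.le, hu'.2⟩ hu.1.le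
          exact sin_nonpos_of_nonpos_of_neg_pi_le (by linarith) (by linarith)
        linarith
      · have : ∫ u in (0 : ℝ)..t, g u ≤ 0 :=
          intervalIntegral_nonpos_of_Ioc ht0 fun u hu => hneg u <| by
            have hu' : u ∈ Icc (0 : ℝ) 1 := ⟨hu.1.le, hu.2.trans ht1⟩
            have := hq hu' ⟨ht0, ht1⟩ hu.2
            have := (hq' u hu').1
            have := sin_nonneg_of_nonneg_of_le_pi (x := q u - x + 2 * π)
              (by linarith) (by linarith)
            rwa [sin_add_two_pi] at this
        linarith [htail 1 hc1 le_rfl]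
  · have hhead : ∀ a, 0 ≤ a → a ≤ c → 0 ≤ ∫ u in a..c, g u := fun a ha hac =>
      intervalIntegral_nonneg_of_Ioc hac fun u hu => hpos u <| by
        have hu' : u ∈ Ioc (0 : ℝ) 1 := ⟨ha.trans_lt hu.1, hu.2.trans hc1⟩
        have := (hcx u hu').2 hu.2
        have := (hq' u ⟨hu'.1.le, hu'.2⟩).1
        exact sin_nonpos_of_nonpos_of_neg_pi_le (by linarith) (by linarith)
    rcases le_total t c with h | h
    · linarith [hhead t ht0 h]
    · rcases le_total (q t) (x + π) with h' | h'
      · have : ∫ u in c..t, g u ≤ 0 := intervalIntegral_nonpos_of_Ioc h fun u hu => hneg u <| by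
          have hu' : u ∈ Ioc (0 : ℝ) 1 := ⟨hc0.trans_lt hu.1, hu.2.trans ht1⟩
          have := hgt u hu' hu.1
          have := hq ⟨hu'.1.le, hu'.2⟩ ⟨ht0, ht1⟩ hu.2
          exact sin_nonneg_of_nonneg_of_le_pi (by linarith) (by linarith)
        linarith
      · have : 0 ≤ ∫ u in t..1, g u := intervalIntegral_nonneg_of_Ioc ht1 fun u hu => hpos u <| by
          have hu' : u ∈ Icc (0 : ℝ) 1 := ⟨ht0.trans hu.1.le, hu.2⟩
          have := hq ⟨ht0, ht1⟩ hu' hu.1.le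
          have := (hq' u hu').2
          exact hsin_pos _ (by linarith) (by linarith)
        linarith [hhead 0 le_rfl hc0]

lemma exists_clm_exp_eq_sinusoid (f : ℂ →L[ℝ] ℝ) : ∃ A x : ℝ, 0 ≤ A ∧ x ∈ Icc 0 (2 * π) ∧
    ∀ s : ℝ, f (Complex.exp (Complex.I * s)) = -(A * sin (s - x)) := by
  have key : ∀ A x : ℝ, A * sin x = f 1 → A * cos x = -f Complex.I →
      ∀ s : ℝ, f (Complex.exp (Complex.I * s)) = -(A * sin (s - x)) := by
    intro A x h1 h2 s
    have : Complex.exp (Complex.I * s) = cos s • (1 : ℂ) + sin s • Complex.I := by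
      rw [mul_comm, Complex.exp_mul_I]
      simp
    rw [this, map_add, map_smul, map_smul, sin_sub, smul_eq_mul, smul_eq_mul, ← h1]
    linear_combination sin s * h2
  let w : ℂ := ⟨-f Complex.I, f 1⟩
  have hre : ‖w‖ * cos w.arg = -f Complex.I := Complex.norm_mul_cos_arg w
  have him : ‖w‖ * sin w.arg = f 1 := Complex.norm_mul_sin_arg w
  have hpi := Complex.arg_le_pi w
  have hpi' := Complex.neg_pi_lt_arg w
  rcases le_total 0 w.arg with h | h
  · exact ⟨‖w‖, w.arg, norm_nonneg _, ⟨h, by linarith⟩, key _ _ him hre⟩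
  · exact ⟨‖w‖, w.arg + 2 * π, norm_nonneg _, ⟨by linarith, by linarith⟩,
      key _ _ (by rwa [sin_add_two_pi]) (by rwa [cos_add_two_pi])⟩

/-! ### The quantile function -/

lemma cdf'_le_one (ρ : Measure ℝ) [IsProbabilityMeasure ρ] (x : ℝ) : cdf' ρ x ≤ 1 :=
  measureReal_le_one

lemma cdf'_nonneg (ρ : Measure ℝ) (x : ℝ) : 0 ≤ cdf' ρ x := ENNReal.toReal_nonneg

lemma qf_nonneg (ρ : Measure ℝ) (u : ℝ) : 0 ≤ qf ρ u := Real.sInf_nonneg fun _ hx => hx.1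

lemma measure_Iio_zero {ρ : Measure ℝ} (hρ : ρ (Set.Ico 0 (2 * π))ᶜ = 0) :
    ρ (Iio 0) = 0 :=
  measure_mono_null (t := (Ico 0 (2 * π))ᶜ) (fun _ hx h => absurd h.1 (not_le.2 hx)) hρ

section

variable {ρ : Measure ℝ} [IsProbabilityMeasure ρ]

lemma cdf'_eq_cdf (hρ : ρ (Set.Ico 0 (2 * π))ᶜ = 0) (x : ℝ) :
    cdf' ρ x = ProbabilityTheory.cdf ρ x := by
  rw [ProbabilityTheory.cdf_eq_real, cdf', ← measureReal_def]
  refine measureReal_congr ?_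
  filter_upwards [measure_eq_zero_iff_ae_notMem.1 (measure_Iio_zero hρ)] with y hy
  have hy' : 0 ≤ y := not_lt.1 hy
  exact propext ⟨fun h => h.2, fun h => ⟨hy', h⟩⟩

lemma cdf'_two_pi (hρ : ρ (Set.Ico 0 (2 * π))ᶜ = 0) : cdf' ρ (2 * π) = 1 := by
  rw [cdf', (prob_compl_eq_zero_iff measurableSet_Icc).1 (measure_mono_null
    (compl_subset_compl.2 Ico_subset_Icc_self) hρ), ENNReal.toReal_one]

lemma qf_le_two_pi (hρ : ρ (Set.Ico 0 (2 * π))ᶜ = 0) {u : ℝ} (hu : u ≤ 1) :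
    qf ρ u ≤ 2 * π :=
  csInf_le ⟨0, fun _ h => h.1⟩ ⟨two_pi_pos.le, by rwa [cdf'_two_pi hρ]⟩

lemma monotoneOn_qf (hρ : ρ (Set.Ico 0 (2 * π))ᶜ = 0) : MonotoneOn (qf ρ) (Iic 1) := by
  intro u _ v hv huv
  refine csInf_le_csInf ⟨0, fun _ h => h.1⟩ ⟨2 * π, two_pi_pos.le, ?_⟩
    fun x hx => ⟨hx.1, huv.trans hx.2⟩
  rwa [cdf'_two_pi hρ]

lemma qf_le_iff (hρ : ρ (Set.Ico 0 (2 * π))ᶜ = 0) {u x : ℝ} (hu : u ≤ 1)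
    (hx : 0 ≤ x) : qf ρ u ≤ x ↔ u ≤ cdf' ρ x := by
  refine ⟨fun h => ?_, fun h => csInf_le ⟨0, fun _ h => h.1⟩ ⟨hx, h⟩⟩
  have hlt : ∀ y ∈ Ioi x, u ≤ ProbabilityTheory.cdf ρ y := by
    intro y hy
    obtain ⟨z, hz, hzy⟩ := exists_lt_of_csInf_lt
      (s := {x : ℝ | 0 ≤ x ∧ u ≤ cdf' ρ x})
      ⟨2 * π, two_pi_pos.le, by rwa [cdf'_two_pi hρ]⟩ (h.trans_lt hy)
    rw [← cdf'_eq_cdf hρ]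
    refine hz.2.trans ?_
    rw [cdf'_eq_cdf hρ, cdf'_eq_cdf hρ]
    exact ProbabilityTheory.monotone_cdf ρ hzy.le
  rw [cdf'_eq_cdf hρ]
  refine ge_of_tendsto (((ProbabilityTheory.cdf ρ).right_continuous x).mono_left
    (nhdsWithin_mono x Ioi_subset_Ici_self)) ?_
  filter_upwards [self_mem_nhdsWithin] with y hy using hlt y hy

lemma aemeasurable_qf (hρ : ρ (Set.Ico 0 (2 * π))ᶜ = 0) :
    AEMeasurable (qf ρ) (volume.restrict (Ioc 0 1)) :=
  aemeasurable_restrict_of_monotoneOn measurableSet_Ioc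
    ((monotoneOn_qf hρ).mono fun _ h => h.2)

lemma preimage_qf_Iic (hρ : ρ (Set.Ico 0 (2 * π))ᶜ = 0) {x : ℝ} (hx : 0 ≤ x) :
    qf ρ ⁻¹' Iic x ∩ Ioc 0 1 = Ioc 0 (cdf' ρ x) := by
  ext u
  refine ⟨fun ⟨h, h0, h1⟩ => ⟨h0, (qf_le_iff hρ h1 hx).1 h⟩, fun ⟨h0, h⟩ => ?_⟩
  have h1 := h.trans (cdf'_le_one ρ x)
  exact ⟨(qf_le_iff hρ h1 hx).2 h, h0, h1⟩

lemma map_qf (hρ : ρ (Set.Ico 0 (2 * π))ᶜ = 0) :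
    (volume.restrict (Ioc 0 1)).map (qf ρ) = ρ := by
  symm
  refine Measure.ext_of_Iic _ _ fun x => ?_
  rw [Measure.map_apply_of_aemeasurable (aemeasurable_qf hρ) measurableSet_Iic,
    Measure.restrict_apply' measurableSet_Ioc]
  rcases le_or_gt 0 x with hx | hx
  · rw [preimage_qf_Iic hρ hx, Real.volume_Ioc, sub_zero, cdf'_eq_cdf hρ,
      ProbabilityTheory.ofReal_cdf]
  · have : qf ρ ⁻¹' Iic x = ∅ := by
      ext u
      simpa using hx.trans_le (qf_nonneg ρ u)
    rw [this, empty_inter, measure_empty]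
    exact measure_mono_null (Iic_subset_Iio.2 hx) (measure_Iio_zero hρ)

lemma intervalIntegrable_exp_qf (hρ : ρ (Set.Ico 0 (2 * π))ᶜ = 0) :
    IntervalIntegrable (fun u => Complex.exp (Complex.I * (qf ρ u))) volume 0 1 := by
  rw [intervalIntegrable_iff_integrableOn_Ioc_of_le zero_le_one]
  refine Integrable.of_bound (C := 1) ?_ (ae_of_all _ fun u => ?_)
  · have : Continuous fun x : ℝ => Complex.exp (Complex.I * x) := by fun_prop
    exact this.comp_aestronglyMeasurable (aemeasurable_qf hρ).aestronglyMeasurable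
  · rw [mul_comm, Complex.norm_exp_ofReal_mul_I]

lemma Zc_cdf' (hρ : ρ (Set.Ico 0 (2 * π))ᶜ = 0) {x : ℝ} (hx : 0 ≤ x) :
    Zc ρ (cdf' ρ x) = ∫ s in Iic x, Complex.exp (Complex.I * s) ∂ρ := by
  have hcont : Continuous fun x : ℝ => Complex.exp (Complex.I * x) := by fun_prop
  conv_rhs => rw [← map_qf hρ]
  rw [setIntegral_map measurableSet_Iic hcont.aestronglyMeasurable (aemeasurable_qf hρ),
    Measure.restrict_restrict₀ ((aemeasurable_qf hρ).nullMeasurableSet_preimage measurableSet_Iic),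
    preimage_qf_Iic hρ hx, Zc, intervalIntegral.integral_of_le (cdf'_nonneg ρ x)]

lemma Zc_one (hρ : ρ (Set.Ico 0 (2 * π))ᶜ = 0) :
    Zc ρ 1 = ∫ s, Complex.exp (Complex.I * s) ∂ρ := by
  rw [← cdf'_two_pi hρ, Zc_cdf' hρ two_pi_pos.le]
  refine setIntegral_eq_integral_of_ae_compl_eq_zero ?_
  filter_upwards [measure_eq_zero_iff_ae_notMem.1 hρ] with s hs hs'
  exact absurd (not_not.1 hs).2.le hs'

lemma isCompact_CCS (hρ : ρ (Set.Ico 0 (2 * π))ᶜ = 0) : IsCompact (CCS ρ) := by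
  refine IsCompact.convexHull_of_finiteDimensional (isCompact_Icc.image_of_continuousOn ?_)
  have := intervalIntegral.continuousOn_primitive_interval
    ((intervalIntegrable_iff_integrableOn_Icc_of_le zero_le_one).1
      (intervalIntegrable_exp_qf hρ) |>.mono_set (uIcc_of_le zero_le_one).le)
  rwa [uIcc_of_le zero_le_one] at this

end

lemma Zc_cdf'_mem_CCS (ρ : Measure ℝ) [IsProbabilityMeasure ρ] (x : ℝ) :
    Zc ρ (cdf' ρ x) ∈ CCS ρ :=
  subset_convexHull ℝ _ ⟨_, ⟨cdf'_nonneg ρ x, cdf'_le_one ρ x⟩, rfl⟩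

/-- A linear functional is maximised on `CCS ρ` at the point of the curve whose tangent angle `x`
depends only on the functional. -/
lemma exists_angle_isMax (f : ℂ →L[ℝ] ℝ) : ∃ x : ℝ, 0 ≤ x ∧
    ∀ (ρ : Measure ℝ) [IsProbabilityMeasure ρ], ρ (Set.Ico 0 (2 * π))ᶜ = 0 →
      ∫ s, Complex.exp (Complex.I * s) ∂ρ = 0 → ∀ a ∈ CCS ρ, f a ≤ f (Zc ρ (cdf' ρ x)) := by
  obtain ⟨A, x, hA, hx, hf⟩ := exists_clm_exp_eq_sinusoid f
  refine ⟨x, hx.1, fun ρ _ hρ h0 a ha => le_of_mem_convexHull f ?_ ha⟩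
  have hint := intervalIntegrable_exp_qf hρ
  have hZ : ∀ t ∈ Icc (0 : ℝ) 1,
      f (Zc ρ t) = ∫ u in (0 : ℝ)..t, f (Complex.exp (Complex.I * (qf ρ u))) := fun t ht =>
    (f.intervalIntegral_comp_comm
      (hint.mono_set (uIcc_subset_uIcc (by simp) (by simpa using ht)))).symm
  rintro _ ⟨t, ht, rfl⟩
  have hc : cdf' ρ x ∈ Icc (0 : ℝ) 1 := ⟨cdf'_nonneg ρ x, cdf'_le_one ρ x⟩
  rw [hZ t ht, hZ _ hc]
  refine integral_sinusoid_le hA hx ((monotoneOn_qf hρ).mono fun _ h => h.2)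
    (fun u hu => ⟨qf_nonneg ρ u, qf_le_two_pi hρ hu.2⟩) (fun u => hf _) ?_ ?_ hc
    (fun u hu => qf_le_iff hρ hu.2 hx.1) ht
  · exact ⟨f.integrable_comp hint.1, f.integrable_comp hint.2⟩
  · rw [← hZ 1 (by simp), Zc_one hρ, h0, map_zero]

theorem stmt11 (μ ν : Measure ℝ) [IsProbabilityMeasure μ] [IsProbabilityMeasure ν]
    (hμs : μ (Set.Ico 0 (2*π))ᶜ = 0) (hνs : ν (Set.Ico 0 (2*π))ᶜ = 0)
    (hμ0 : ∫ x, Complex.exp (Complex.I * x) ∂μ = 0)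
    (hν0 : ∫ x, Complex.exp (Complex.I * x) ∂ν = 0)
    (l : ℝ) (hl : l ∈ Set.Icc (0:ℝ) 1) :
    CCS (ENNReal.ofReal l • μ + ENNReal.ofReal (1-l) • ν) = l • CCS μ + (1-l) • CCS ν := by
  set ρ := ENNReal.ofReal l • μ + ENNReal.ofReal (1 - l) • ν with hρ_def
  have hl' : 0 ≤ 1 - l := sub_nonneg.2 hl.2
  have hprob : IsProbabilityMeasure ρ := ⟨by
    simp [hρ_def, ← ENNReal.ofReal_add hl.1 hl']⟩
  have hρs : ρ (Set.Ico 0 (2 * π))ᶜ = 0 := by simp [hρ_def, hμs, hνs]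
  have hint : ∀ (m : Measure ℝ) [IsFiniteMeasure m],
      Integrable (fun s : ℝ => Complex.exp (Complex.I * s)) m := fun m _ =>
    Integrable.of_bound (C := 1)
      (Continuous.aestronglyMeasurable (by fun_prop))
      (ae_of_all _ fun s => by rw [mul_comm, Complex.norm_exp_ofReal_mul_I])
  have hmix : ∀ S : Set ℝ, ∫ s in S, Complex.exp (Complex.I * s) ∂ρ =
      l • (∫ s in S, Complex.exp (Complex.I * s) ∂μ) +
        (1 - l) • ∫ s in S, Complex.exp (Complex.I * s) ∂ν := fun S => by
    rw [hρ_def, Measure.restrict_add, Measure.restrict_smul, Measure.restrict_smul,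
      integral_add_measure ((hint _).smul_measure ENNReal.ofReal_ne_top)
        ((hint _).smul_measure ENNReal.ofReal_ne_top),
      integral_smul_measure, integral_smul_measure, ENNReal.toReal_ofReal hl.1,
      ENNReal.toReal_ofReal hl']
  have hρ0 : ∫ s, Complex.exp (Complex.I * s) ∂ρ = 0 := by
    simpa [hμ0, hν0] using hmix univ
  have hZ : ∀ x, 0 ≤ x →
      Zc ρ (cdf' ρ x) = l • Zc μ (cdf' μ x) + (1 - l) • Zc ν (cdf' ν x) := fun x hx => by
    rw [Zc_cdf' hρs hx, Zc_cdf' hμs hx, Zc_cdf' hνs hx, hmix]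
  refine Subset.antisymm (subset_of_forall_clm_le ?_ ?_ ?_) (subset_of_forall_clm_le ?_ ?_ ?_)
  · exact ((convex_convexHull ℝ _).smul l).add ((convex_convexHull ℝ _).smul (1 - l))
  · exact (((isCompact_CCS hμs).smul l).add ((isCompact_CCS hνs).smul (1 - l))).isClosed
  · intro f a ha
    obtain ⟨x, hx, hmax⟩ := exists_angle_isMax f
    refine ⟨Zc ρ (cdf' ρ x), ?_, hmax ρ hρs hρ0 a ha⟩
    rw [hZ x hx]
    exact add_mem_add (smul_mem_smul_set (Zc_cdf'_mem_CCS μ x))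
      (smul_mem_smul_set (Zc_cdf'_mem_CCS ν x))
  · exact convex_convexHull ℝ _
  · exact (isCompact_CCS hρs).isClosed
  · intro f a ha
    obtain ⟨x, hx, hmax⟩ := exists_angle_isMax f
    refine ⟨Zc ρ (cdf' ρ x), Zc_cdf'_mem_CCS ρ x, ?_⟩
    obtain ⟨_, ⟨b, hb, rfl⟩, _, ⟨c, hc, rfl⟩, rfl⟩ := ha
    simp only [hZ x hx, map_add, map_smul, smul_eq_mul]
    exact add_le_add (mul_le_mul_of_nonneg_left (hmax μ hμs hμ0 b hb) hl.1)
      (mul_le_mul_of_nonneg_left (hmax ν hνs hν0 c hc) hl')
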